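/- Fix an integer n ≥ 2 and a real number t₀ ∈ ℤ[1/n] (i.e. t₀ = p/n^k for some integer p and natural number k). Let h ∈ Homeo₊(ℝ) and set g = h ∘ τ_{t₀} ∘ h⁻¹ ∘ τ_{t₀}⁻¹. Suppose: (i) there exists a compact set K ⊆ ℝ such that h commutes with u ∘ h ∘ u⁻¹ for every u ∈ BS(1,n) with u(K) ∩ K = ∅; (ii) there exists a compact set K' ⊆ ℝ such that g commutes with u ∘ g ∘ u⁻¹ for every u ∈ BS(1,n) with u(K') ∩ K' = ∅; (iii) h commutes with τ_{t₀} ∘ h ∘ τ_{t₀}⁻¹; and (iv) h does not commute with τ_{t₀}. Then g has compact support. -/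

import Mathlib

open Set Topology

/-- The group of self-homeomorphisms of `X`, with `(f * g) x = f (g x)`. -/
instance {X : Type*} [TopologicalSpace X] : Group (X ≃ₜ X) where
  mul f g := g.trans f
  one := Homeomorph.refl X
  inv := Homeomorph.symm
  mul_assoc _ _ _ := Homeomorph.ext fun _ => rfl
  one_mul _ := Homeomorph.ext fun _ => rfl
  mul_one _ := Homeomorph.ext fun _ => rfl
  inv_mul_cancel f := Homeomorph.ext fun x => f.symm_apply_apply x

/-- The support of a homeomorphism: the closure of the set of non-fixed points. -/
def Supp (f : ℝ ≃ₜ ℝ) : Set ℝ := closure {x | f x ≠ x}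

/-- The homeomorphism `x ↦ n·x` of `ℝ`. -/
noncomputable def dilation (n : ℕ) (hn : 2 ≤ n) : ℝ ≃ₜ ℝ :=
  Homeomorph.mulLeft₀ (n : ℝ) (by positivity)

/-- The homeomorphism `x ↦ x + t` of `ℝ`. -/
noncomputable def translation (t : ℝ) : ℝ ≃ₜ ℝ := Homeomorph.addRight t

/-- The standard affine Baumslag–Solitar group `BS(1,n)`, generated by `x ↦ n·x`
and `x ↦ x + 1`, as a subgroup of the homeomorphism group of `ℝ`. -/
noncomputable def BSgroup (n : ℕ) (hn : 2 ≤ n) : Subgroup (ℝ ≃ₜ ℝ) :=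
  Subgroup.closure {dilation n hn, translation 1}

/-!
Translations in `BS(1,n)` are dense and commutation is a closed condition, so `h` commutes with all
distant translates both of itself and of its conjugate by the dilation. This forces `h` to be a
translation or to have compact support, and in both cases its commutator with any translation has
compact support.

If `h` has a fixed point, commutation with distant translates keeps the frontier of the fixed point
set invariant, and as this set contains no interval, `h` is a translation near `-∞`; invariance of
its frontier makes this translation trivial. The same holds near `+∞`.

If `h` has no fixed point but agrees somewhere with one of its translates, their quotient has a
fixed point, hence compact support; it commutes with a fixed-point-free homeomorphism, so it is
trivial. Therefore equal values of the displacement `h x - x` are separated by a period, and the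
displacement is injective or constant. If it is injective it is strictly monotone, and comparing the
commutation relations for `h` and for its dilated conjugate at points far out gives a contradiction.
-/

namespace RealHomeo

open Filter
open Homeomorph (mul_apply one_apply)

section Composition

variable {X : Type*} [TopologicalSpace X]

lemma inv_apply_eq_iff (f : X ≃ₜ X) {x y : X} : f⁻¹ x = y ↔ x = f y := f.symm_apply_eq

lemma commute_iff_apply {f g : X ≃ₜ X} : Commute f g ↔ ∀ x, f (g x) = g (f x) :=
  DFunLike.ext_iff

lemma mem_frontier_fixedPoints_iff_of_commute {f c : X ≃ₜ X} (h : Commute f c) (x : X) :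
    c x ∈ frontier (Function.fixedPoints f) ↔ x ∈ frontier (Function.fixedPoints f) := by
  have hpre : c ⁻¹' Function.fixedPoints f = Function.fixedPoints f := by
    ext y
    simp only [mem_preimage, Function.mem_fixedPoints_iff, commute_iff_apply.1 h y,
      c.injective.eq_iff]
  rw [← mem_preimage, c.preimage_frontier, hpre]

lemma tendsto_cocompact (f : X ≃ₜ X) : Tendsto f (cocompact X) (cocompact X) :=
  f.isClosedEmbedding.tendsto_cocompact

end Composition

section CompactSupport

lemma isCompact_supp_iff {f : ℝ ≃ₜ ℝ} :
    IsCompact (Supp f) ↔ ∀ᶠ x in cocompact ℝ, f x = x := by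
  constructor
  · exact fun hf ↦ mem_cocompact'.2 ⟨Supp f, hf, subset_closure⟩
  · intro hf
    obtain ⟨K, hK, hsub⟩ := mem_cocompact'.1 hf
    exact hK.closure_of_subset hsub

lemma isCompact_supp_one : IsCompact (Supp 1) :=
  isCompact_supp_iff.2 <| .of_forall one_apply

lemma isCompact_supp_mul {f g : ℝ ≃ₜ ℝ} (hf : IsCompact (Supp f)) (hg : IsCompact (Supp g)) :
    IsCompact (Supp (f * g)) := by
  rw [isCompact_supp_iff] at *
  filter_upwards [hf, hg] with x hfx hgx
  rw [mul_apply, hgx, hfx]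

lemma isCompact_supp_inv {f : ℝ ≃ₜ ℝ} (hf : IsCompact (Supp f)) : IsCompact (Supp f⁻¹) := by
  rw [isCompact_supp_iff] at *
  filter_upwards [hf] with x hx
  rw [inv_apply_eq_iff, hx]

lemma isCompact_supp_conj (u : ℝ ≃ₜ ℝ) {f : ℝ ≃ₜ ℝ} (hf : IsCompact (Supp f)) :
    IsCompact (Supp (u * f * u⁻¹)) := by
  rw [isCompact_supp_iff] at *
  filter_upwards [(tendsto_cocompact u⁻¹).eventually hf] with x hx
  rw [mul_apply, mul_apply, hx, Homeomorph.inv_apply, u.apply_symm_apply]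

/-- The supremum of the set moved by `g` is fixed by `c`. -/
lemma exists_apply_eq_of_commute_of_isCompact_supp {c g : ℝ ≃ₜ ℝ} (hc : Monotone c)
    (hcg : Commute g c) (hg : IsCompact (Supp g)) (hne : g ≠ 1) : ∃ x, c x = x := by
  set N : Set ℝ := {x | g x ≠ x}
  have hN : N.Nonempty := by
    simpa [N, Set.Nonempty, DFunLike.ext_iff] using hne
  have hbdd : BddAbove N := hg.bddAbove.mono subset_closure
  have hpre : c ⁻¹' N = N := by
    ext x
    simp only [N, mem_preimage, mem_ofPred_eq, commute_iff_apply.1 hcg x, ne_eq, c.injective.eq_iff]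
  have himage : c '' N = N :=
    calc c '' N = c '' (c ⁻¹' N) := by rw [hpre]
      _ = N := c.image_preimage N
  refine ⟨sSup N, ?_⟩
  rw [hc.map_csSup_of_continuousAt c.continuous.continuousAt hN hbdd, himage]

end CompactSupport

section Translation

@[simp]
lemma translation_apply (t x : ℝ) : translation t x = x + t := rfl

lemma translation_inv_apply (t x : ℝ) : (translation t)⁻¹ x = x - t := by
  rw [inv_apply_eq_iff, translation_apply, sub_add_cancel]

lemma translation_add (s t : ℝ) : translation (s + t) = translation s * translation t := by
  ext x
  simp only [translation_apply, mul_apply]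
  ring

/-- The conjugation `f ↦ τ_s ∘ f ∘ τ_s⁻¹`, which translates the graph of `f` along the diagonal. -/
noncomputable def translate (s : ℝ) : MulAut (ℝ ≃ₜ ℝ) := MulAut.conj (translation s)

lemma translate_apply (s : ℝ) (f : ℝ ≃ₜ ℝ) (x : ℝ) : translate s f x = f (x - s) + s := by
  simp only [translate, MulAut.conj_apply, mul_apply, translation_apply, translation_inv_apply]

lemma translate_translate (s t : ℝ) (f : ℝ ≃ₜ ℝ) :
    translate s (translate t f) = translate (s + t) f := by
  simp only [translate, translation_add, map_mul, MulAut.mul_apply]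

lemma translate_zero (f : ℝ ≃ₜ ℝ) : translate 0 f = f := by
  ext x
  simp [translate_apply]

lemma strictMono_translate {f : ℝ ≃ₜ ℝ} (hf : StrictMono f) (s : ℝ) :
    StrictMono (translate s f) := fun x y hxy ↦ by
  simpa only [translate_apply, add_lt_add_iff_right, hf.lt_iff_lt, sub_lt_sub_iff_right]

lemma isClosed_setOf_commute_translate (f g : ℝ ≃ₜ ℝ) :
    IsClosed {s | Commute f (translate s g)} := by
  simp only [commute_iff_apply, translate_apply, ofPred_forall]
  exact isClosed_iInter fun x ↦ isClosed_eq (by fun_prop) (by fun_prop)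

end Translation

section AsympCommute

/-- `f` commutes with all sufficiently distant translates of `g`. -/
def AsympCommute (f g : ℝ ≃ₜ ℝ) : Prop :=
  ∀ᶠ s in cocompact ℝ, Commute f (translate s g)

namespace AsympCommute

variable {f g g₁ g₂ : ℝ ≃ₜ ℝ}

lemma mul_right (h₁ : AsympCommute f g₁) (h₂ : AsympCommute f g₂) :
    AsympCommute f (g₁ * g₂) := by
  filter_upwards [h₁, h₂] with s hs₁ hs₂
  rw [map_mul]
  exact hs₁.mul_right hs₂

lemma inv_right (h : AsympCommute f g) : AsympCommute f g⁻¹ := by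
  filter_upwards [h] with s hs
  rw [map_inv]
  exact hs.inv_right

lemma translate_right (h : AsympCommute f g) (t : ℝ) : AsympCommute f (translate t g) := by
  filter_upwards [(tendsto_cocompact (translation t)).eventually h] with s hs
  rwa [translate_translate]

lemma symm (h : AsympCommute f g) : AsympCommute g f := by
  filter_upwards [(tendsto_cocompact (Homeomorph.neg ℝ)).eventually h] with s hs
  have hs' := hs.symm.map (translate s)
  rwa [translate_translate, Homeomorph.coe_neg, add_neg_cancel, translate_zero] at hs'

lemma inv (h : AsympCommute f g) : AsympCommute f⁻¹ g⁻¹ := h.inv_right.symm.inv_right.symm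

lemma conj_neg (h : AsympCommute f g) :
    AsympCommute (MulAut.conj (Homeomorph.neg ℝ) f) (MulAut.conj (Homeomorph.neg ℝ) g) := by
  filter_upwards [(tendsto_cocompact (Homeomorph.neg ℝ)).eventually h] with s hs
  have hconj : MulAut.conj (Homeomorph.neg ℝ) (translate (-s) g) =
      translate s (MulAut.conj (Homeomorph.neg ℝ) g) := by
    ext x
    change -(translate (-s) g (-x)) = _
    rw [translate_apply, translate_apply]
    change _ = -g (-(x - s)) + s
    ring_nf
  have hs' := hs.map (MulAut.conj (Homeomorph.neg ℝ))
  rwa [Homeomorph.coe_neg, hconj] at hs'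

end AsympCommute

end AsympCommute

section FixedPoint

lemma isTotallyDisconnected_of_interior_eq_empty {α : Type*} [ConditionallyCompleteLinearOrder α]
    [TopologicalSpace α] [OrderTopology α] [DenselyOrdered α] {s : Set α}
    (hs : interior s = ∅) : IsTotallyDisconnected s := by
  refine isTotallyDisconnected_iff_lt.2 fun x _ y _ hxy ↦ ?_
  by_contra! hsub
  have hIoo : Ioo x y ⊆ interior s :=
    interior_maximal (fun z hz ↦ not_imp_not.1 (hsub z) hz) isOpen_Ioo
  exact (nonempty_Ioo.2 hxy).ne_empty (subset_empty_iff.1 (hs ▸ hIoo))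

variable {f : ℝ ≃ₜ ℝ}

/-- The map `s ↦ translate s f a` is continuous and takes values in the frontier of the fixed
point set, which is totally disconnected, so it is constant for large `s`. -/
lemma exists_eventually_atBot_apply_eq_add (h : ∀ᶠ s in atTop, Commute f (translate s f)) {a : ℝ}
    (ha : a ∈ frontier (Function.fixedPoints f)) : ∃ d, ∀ᶠ y in atBot, f y = y + d := by
  obtain ⟨R, hR⟩ := eventually_atTop.1 h
  have hdisc : IsTotallyDisconnected (frontier (Function.fixedPoints f)) :=
    isTotallyDisconnected_of_interior_eq_empty
      (interior_frontier (isClosed_fixedPoints f.continuous))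
  have hmaps : MapsTo (fun s ↦ translate s f a) (Ici R) (frontier (Function.fixedPoints f)) :=
    fun s hs ↦ (mem_frontier_fixedPoints_iff_of_commute (hR s hs) a).2 ha
  have hcont : Continuous fun s ↦ translate s f a := by
    simp only [translate_apply]
    fun_prop
  have hsub : ((fun s ↦ translate s f a) '' Ici R).Subsingleton :=
    hdisc _ hmaps.image_subset (isPreconnected_Ici.image _ hcont.continuousOn)
  refine ⟨translate R f a - a, eventually_atBot.2 ⟨a - R, fun y hy ↦ ?_⟩⟩
  have heq : translate (a - y) f a = translate R f a :=
    hsub (mem_image_of_mem _ (mem_Ici.2 (by linarith))) (mem_image_of_mem _ self_mem_Ici)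
  rw [← heq, translate_apply, sub_sub_cancel]
  ring

lemma add_mem_frontier_fixedPoints_iff (h : ∀ᶠ s in atTop, Commute f (translate s f)) {d : ℝ}
    (hd : ∀ᶠ y in atBot, f y = y + d) (b : ℝ) :
    b + d ∈ frontier (Function.fixedPoints f) ↔ b ∈ frontier (Function.fixedPoints f) := by
  have htendsto : Tendsto (fun s ↦ b - s) atTop atBot :=
    tendsto_atBot_add_const_left _ b tendsto_neg_atTop_atBot
  obtain ⟨s, hs, hds⟩ := (h.and (htendsto.eventually hd)).exists
  have himage : translate s f b = b + d := by
    rw [translate_apply, hds]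
    ring
  rw [← himage, mem_frontier_fixedPoints_iff_of_commute hs]

lemma eventually_atBot_apply_eq_self (h : ∀ᶠ s in atTop, Commute f (translate s f)) {p : ℝ}
    (hp : f p = p) : ∀ᶠ y in atBot, f y = y := by
  by_cases huniv : Function.fixedPoints f = univ
  · exact .of_forall (eq_univ_iff_forall.1 huniv)
  obtain ⟨a, ha⟩ : (frontier (Function.fixedPoints f)).Nonempty :=
    nonempty_frontier_iff.2 ⟨⟨p, hp⟩, huniv⟩
  obtain ⟨d, hd⟩ := exists_eventually_atBot_apply_eq_add h ha
  suffices d = 0 by simpa [this] using hd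
  by_contra hd₀
  have hbdd : BddBelow (frontier (Function.fixedPoints f)) := by
    obtain ⟨M, hM⟩ := eventually_atBot.1 hd
    refine ⟨M, fun b hb ↦ le_of_not_ge fun hbM ↦ hd₀ ?_⟩
    have hfix : f b = b := (isClosed_fixedPoints f.continuous).frontier_subset hb
    linarith [hM b hbM]
  set m := sInf (frontier (Function.fixedPoints f))
  have hm : m ∈ frontier (Function.fixedPoints f) := isClosed_frontier.csInf_mem ⟨a, ha⟩ hbdd
  have hadd : m ≤ m + d := csInf_le hbdd ((add_mem_frontier_fixedPoints_iff h hd m).2 hm)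
  have hsub : m ≤ m - d := csInf_le hbdd
    ((add_mem_frontier_fixedPoints_iff h hd (m - d)).1 (by rwa [sub_add_cancel]))
  exact hd₀ (by linarith)

theorem AsympCommute.isCompact_supp (h : AsympCommute f f) {p : ℝ} (hp : f p = p) :
    IsCompact (Supp f) := by
  have hbot : ∀ᶠ y in atBot, f y = y :=
    eventually_atBot_apply_eq_self (atTop_le_cocompact h) hp
  have hneg : ∀ᶠ y in atBot, MulAut.conj (Homeomorph.neg ℝ) f y = y := by
    refine eventually_atBot_apply_eq_self (atTop_le_cocompact h.conj_neg) (p := -p) ?_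
    change -f (- -p) = -p
    rw [neg_neg, hp]
  have htop : ∀ᶠ y in atTop, f y = y := by
    filter_upwards [tendsto_neg_atTop_atBot.eventually hneg] with y hy
    change -f (- -y) = -y at hy
    rwa [neg_neg, neg_inj] at hy
  rw [isCompact_supp_iff, cocompact_eq_atBot_atTop]
  exact eventually_sup.2 ⟨hbot, htop⟩

end FixedPoint

section FixedPointFree

variable {f : ℝ ≃ₜ ℝ}

lemma forall_lt_apply_or_forall_apply_lt {φ : ℝ → ℝ} (hφ : Continuous φ) (hfree : ∀ x, φ x ≠ x) :
    (∀ x, x < φ x) ∨ ∀ x, φ x < x := by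
  by_contra! hcon
  obtain ⟨⟨a, ha⟩, b, hb⟩ := hcon
  obtain ⟨x, hx⟩ := intermediate_value_univ₂ hφ continuous_id ha hb
  exact hfree x hx

lemma strictMono_of_forall_apply_ne (hfree : ∀ x, f x ≠ x) : StrictMono f := by
  rcases f.continuous.strictMono_of_inj f.injective with hmono | hanti
  · exact hmono
  rcases forall_lt_apply_or_forall_apply_lt f.continuous hfree with hlt | hlt
  · exact absurd (hanti (hlt 0)) (hlt (f 0)).not_gt
  · exact absurd (hanti (hlt 0)) (hlt (f 0)).not_gt

theorem AsympCommute.eq_translate (h : AsympCommute f f) (hfree : ∀ x, f x ≠ x) {δ q : ℝ}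
    (hq : f q = translate δ f q) : f = translate δ f := by
  set g := (translate δ f)⁻¹ * f with hg
  have hfg : AsympCommute f g := (h.translate_right δ).inv_right.mul_right h
  have hgg : AsympCommute g g := (hfg.symm.translate_right δ).inv_right.mul_right hfg.symm
  have hgq : g q = q := by rw [hg, mul_apply, inv_apply_eq_iff, hq]
  by_contra hne
  obtain ⟨r, hr⟩ := hfg.symm.exists
  obtain ⟨x, hx⟩ := exists_apply_eq_of_commute_of_isCompact_supp
    (strictMono_translate (strictMono_of_forall_apply_ne hfree) r).monotone hr
    (hgg.isCompact_supp hgq) (fun hg₁ ↦ hne (inv_mul_eq_one.1 hg₁).symm)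
  rw [translate_apply, ← eq_sub_iff_add_eq] at hx
  exact hfree _ hx

end FixedPointFree

section Displacement

/-- The displacement function `x ↦ f x - x` of a homeomorphism of the line. -/
def displacement (f : ℝ ≃ₜ ℝ) (x : ℝ) : ℝ := f x - x

variable {f : ℝ ≃ₜ ℝ}

lemma apply_eq_add_displacement (f : ℝ ≃ₜ ℝ) (x : ℝ) : f x = x + displacement f x :=
  (add_sub_cancel x (f x)).symm

lemma displacement_inv (f : ℝ ≃ₜ ℝ) (x : ℝ) :
    displacement f⁻¹ x = -displacement f (f⁻¹ x) := by
  simp [displacement]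

lemma continuous_displacement (f : ℝ ≃ₜ ℝ) : Continuous (displacement f) :=
  f.continuous.sub continuous_id

lemma AsympCommute.periodic_displacement (h : AsympCommute f f) (hfree : ∀ x, f x ≠ x) {δ p : ℝ}
    (hp : displacement f (p + δ) = displacement f p) :
    Function.Periodic (displacement f) δ := by
  have heq : f = translate δ f := by
    refine h.eq_translate hfree (q := p + δ) ?_
    rw [translate_apply, add_sub_cancel_right]
    unfold displacement at hp
    linarith
  intro x
  have hx := DFunLike.congr_fun heq (x + δ)
  rw [translate_apply, add_sub_cancel_right] at hx
  rw [displacement, displacement, hx]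
  ring

/-- If `ψ` is not injective it is periodic, so it attains its maximum, at `p` say. Then
`x ↦ ψ (x + δ) - ψ x` is nonpositive at `p` and nonnegative at `p - δ`, so every `δ` is a period. -/
lemma injective_or_forall_eq_of_periodic {ψ : ℝ → ℝ} (hψ : Continuous ψ)
    (hper : ∀ δ p, ψ (p + δ) = ψ p → Function.Periodic ψ δ) :
    Function.Injective ψ ∨ ∀ x, ψ x = ψ 0 := by
  refine or_iff_not_imp_left.2 fun hinj x ↦ ?_
  obtain ⟨a, b, hab, hne⟩ := Function.not_injective_iff.1 hinj
  have hperiodic : Function.Periodic ψ (b - a) := hper _ a (by rw [add_sub_cancel, hab])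
  obtain ⟨_, ⟨p, rfl⟩, hp⟩ := (hperiodic.compact_of_continuous (sub_ne_zero.2 hne.symm)
    hψ).exists_isGreatest (range_nonempty ψ)
  have hmax : ∀ y, ψ y ≤ ψ p := fun y ↦ hp (mem_range_self y)
  obtain ⟨y, hy⟩ : ∃ y, ψ (y + x) = ψ y :=
    intermediate_value_univ₂ (a := p) (b := p - x) (by fun_prop) hψ (hmax _)
      (by rw [sub_add_cancel]; exact hmax _)
  simpa using hper x y hy 0

end Displacement

section Dilation

variable {f : ℝ ≃ₜ ℝ}

/-- Commutation with `x ↦ c * f ((x + c * y) / c) - c * y`, evaluated at `0`. -/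
lemma AsympCommute.eventually_displacement_mul_displacement {g : ℝ ≃ₜ ℝ} (h : AsympCommute f g)
    {c : ℝ} (hc : c ≠ 0) (hg : ∀ x, g x = c * f (x / c)) :
    ∀ᶠ y in cocompact ℝ, displacement f (c * displacement f y) = displacement f 0 +
      c * (displacement f (y + displacement f 0 / c) - displacement f y) := by
  filter_upwards [(tendsto_cocompact_mul_left₀ (neg_ne_zero.2 hc)).eventually h] with y hy
  have hcomm := commute_iff_apply.1 hy 0
  have hleft : translate (-c * y) g 0 = c * displacement f y := by
    rw [translate_apply, hg, show (0 - -c * y) / c = y by field_simp; ring, displacement]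
    ring
  have hright : translate (-c * y) g (f 0) =
      displacement f 0 + c * displacement f (y + displacement f 0 / c) := by
    rw [translate_apply, hg, apply_eq_add_displacement f 0,
      show (0 + displacement f 0 - -c * y) / c = y + displacement f 0 / c by field_simp; ring,
      apply_eq_add_displacement f (y + _)]
    field_simp
    ring
  rw [hleft, hright, apply_eq_add_displacement] at hcomm
  linarith

/-- Summing the relation for the slope `n` over the points `y + i * d / n` telescopes to the
right-hand side of the relation for the slope `1`. -/
lemma eventually_sum_displacement_eq (hf : AsympCommute f f) {n : ℕ} (hn : 2 ≤ n)
    (hdil : AsympCommute f (MulAut.conj (dilation n hn) f)) :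
    ∀ᶠ y in cocompact ℝ,
      ∑ i ∈ Finset.range n, displacement f (n * displacement f (y + i * (displacement f 0 / n))) =
        n * displacement f (displacement f y) := by
  have hn₀ : (n : ℝ) ≠ 0 := by positivity
  have hrel₁ := hf.eventually_displacement_mul_displacement one_ne_zero (by simp)
  have hreln := hdil.eventually_displacement_mul_displacement hn₀ fun x ↦ by
    rw [MulAut.conj_apply, mul_apply, mul_apply,
      show (dilation n hn)⁻¹ x = x / n from (inv_mul_eq_div _ _)]
    rfl
  set ψ := displacement f
  set d := ψ 0
  have hreln' : ∀ᶠ y in cocompact ℝ, ∀ i ∈ Finset.range n, ψ (n * ψ (y + i * (d / n))) =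
      d + n * (ψ (y + i * (d / n) + d / n) - ψ (y + i * (d / n))) :=
    (eventually_all_finset _).2 fun i _ ↦
      (tendsto_cocompact (translation (i * (d / n)))).eventually hreln
  filter_upwards [hrel₁, hreln'] with y hy₁ hyn
  have htele : ∑ i ∈ Finset.range n, (ψ (y + i * (d / n) + d / n) - ψ (y + i * (d / n))) =
      ψ (y + d) - ψ y := by
    have hsum := Finset.sum_range_sub (fun i : ℕ ↦ ψ (y + i * (d / n))) n
    simpa [add_mul, add_assoc, mul_div_cancel₀ _ hn₀] using hsum
  rw [Finset.sum_congr rfl hyn, Finset.sum_add_distrib, ← Finset.mul_sum, htele]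
  simp only [one_mul, div_one] at hy₁
  simp [hy₁, mul_add]

lemma add_mul_div_mem_Icc {d : ℝ} (hd : 0 ≤ d) {i n : ℕ} (hi : i ≤ n) (y : ℝ) :
    y + i * (d / n) ∈ Icc y (y + d) := by
  have hle : i * (d / n) ≤ d := by
    rw [mul_div_left_comm]
    exact mul_le_of_le_one_right hd (div_le_one_of_le₀ (by exact_mod_cast hi) n.cast_nonneg)
  exact ⟨le_add_of_nonneg_right (by positivity), by gcongr⟩

lemma displacement_lt_mul_displacement (hf : StrictMono f) {c y z : ℝ} (hc : 2 ≤ c)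
    (hz : z ∈ Icc y (y + displacement f 0)) (hdz : displacement f 0 < displacement f z) :
    displacement f y < c * displacement f z := by
  have hyz : displacement f y ≤ displacement f z + (z - y) := by
    have hfyz := hf.monotone hz.1
    unfold displacement
    linarith
  have hd : 0 ≤ displacement f 0 := by linarith [hz.1, hz.2]
  nlinarith [hz.2]

theorem AsympCommute.not_injective_displacement_of_forall_lt_apply (h : AsympCommute f f) {n : ℕ}
    (hn : 2 ≤ n) (hdil : AsympCommute f (MulAut.conj (dilation n hn) f))
    (hlt : ∀ x, x < f x) : ¬ Function.Injective (displacement f) := by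
  intro hinj
  have hsum := eventually_sum_displacement_eq h hn hdil
  set ψ := displacement f
  have hd : 0 < ψ 0 := sub_pos.2 (hlt 0)
  have hn₂ : (2 : ℝ) ≤ n := by exact_mod_cast hn
  have hlt_mul : ∀ y, (∀ z ∈ Icc y (y + ψ 0), ψ 0 < ψ z) → ∀ i ∈ Finset.range n,
      ψ y < n * ψ (y + i * (ψ 0 / n)) := fun y hy i hi ↦
    have hmem := add_mul_div_mem_Icc hd.le (Finset.mem_range.1 hi).le y
    displacement_lt_mul_displacement
      (strictMono_of_forall_apply_ne fun x ↦ (hlt x).ne') hn₂ hmem (hy _ hmem)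
  have hrange : (Finset.range n).Nonempty := Finset.nonempty_range_iff.2 (by lia)
  have hconst : ∀ y, n * ψ (ψ y) = ∑ _i ∈ Finset.range n, ψ (ψ y) := by simp
  rcases (continuous_displacement f).strictMono_of_inj hinj with hmono | hanti
  · obtain ⟨y, hy, hy₀⟩ :=
      ((hsum.filter_mono atTop_le_cocompact).and (eventually_gt_atTop (0 : ℝ))).exists
    have hfar := hlt_mul y fun z hz ↦ hmono (hy₀.trans_le hz.1)
    rw [hconst] at hy
    exact (Finset.sum_lt_sum_of_nonempty hrange fun i hi ↦ hmono (hfar i hi)).ne' hy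
  · obtain ⟨y, hy, hy₀⟩ :=
      ((hsum.filter_mono atBot_le_cocompact).and (eventually_lt_atBot (-ψ 0))).exists
    have hfar := hlt_mul y fun z hz ↦ hanti (by linarith [hz.2])
    rw [hconst] at hy
    exact (Finset.sum_lt_sum_of_nonempty hrange fun i hi ↦ hanti (hfar i hi)).ne hy

theorem AsympCommute.not_injective_displacement (h : AsympCommute f f) {n : ℕ}
    (hn : 2 ≤ n) (hdil : AsympCommute f (MulAut.conj (dilation n hn) f))
    (hfree : ∀ x, f x ≠ x) : ¬ Function.Injective (displacement f) := by
  rcases forall_lt_apply_or_forall_apply_lt f.continuous hfree with hlt | hlt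
  · exact h.not_injective_displacement_of_forall_lt_apply hn hdil hlt
  · intro hinj
    have hdil_inv : AsympCommute f⁻¹ (MulAut.conj (dilation n hn) f⁻¹) := by
      rw [map_inv]
      exact hdil.inv
    refine h.inv.not_injective_displacement_of_forall_lt_apply hn hdil_inv (fun x ↦ ?_) ?_
    · simpa using hlt (f⁻¹ x)
    · have hcomp : displacement f⁻¹ = Neg.neg ∘ displacement f ∘ ⇑f⁻¹ :=
        funext (displacement_inv f)
      rw [hcomp]
      exact neg_injective.comp (hinj.comp f⁻¹.injective)

end Dilation

section BaumslagSolitar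

/-- `f` commutes with its conjugates by all elements of `G` moving some fixed compact set off
itself. -/
def CommutesOffCompact (G : Subgroup (ℝ ≃ₜ ℝ)) (f : ℝ ≃ₜ ℝ) : Prop :=
  ∃ K : Set ℝ, IsCompact K ∧ ∀ u ∈ G, (u '' K) ∩ K = ∅ → Commute f (u * f * u⁻¹)

open scoped Pointwise in
lemma CommutesOffCompact.asympCommute_conj {G : Subgroup (ℝ ≃ₜ ℝ)} {f a : ℝ ≃ₜ ℝ}
    (hf : CommutesOffCompact G f) (hG : Dense {s | translation s ∈ G}) (ha : a ∈ G) :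
    AsympCommute f (MulAut.conj a f) := by
  obtain ⟨K, hK, hcomm⟩ := hf
  have hcompact : IsCompact (K - a '' K) := by
    rw [sub_eq_add_neg]
    exact hK.add (hK.image a.continuous).neg
  have hmoves : ∀ s ∉ K - a '' K, (⇑(translation s * a) '' K) ∩ K = ∅ := by
    intro s hs
    rw [← disjoint_iff_inter_eq_empty, disjoint_left]
    rintro _ ⟨y, hy, rfl⟩ hyK
    exact hs ⟨_, hyK, a y, mem_image_of_mem a hy, by simp⟩
  have hdense : (K - a '' K)ᶜ ∩ {s | translation s ∈ G} ⊆
      {s | Commute f (translate s (MulAut.conj a f))} := by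
    rintro s ⟨hs, hsG⟩
    have hu := hcomm _ (mul_mem hsG ha) (hmoves s hs)
    rwa [← MulAut.conj_apply, map_mul] at hu
  filter_upwards [hcompact.compl_mem_cocompact] with s hs
  exact closure_minimal hdense (isClosed_setOf_commute_translate _ _)
    (hG.open_subset_closure_inter hcompact.isClosed.isOpen_compl hs)

variable {n : ℕ} (hn : 2 ≤ n)

lemma dilation_mem_BSgroup : dilation n hn ∈ BSgroup n hn := Subgroup.subset_closure (by simp)

lemma translation_one_mem_BSgroup : translation 1 ∈ BSgroup n hn :=
  Subgroup.subset_closure (by simp)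

lemma dilation_pow_apply (k : ℕ) (x : ℝ) : (dilation n hn ^ k) x = (n : ℝ) ^ k * x := by
  induction k with
  | zero => simp
  | succ k ih =>
    rw [pow_succ', mul_apply, ih, pow_succ', mul_assoc]
    rfl

lemma translation_one_div_pow_mem_BSgroup (k : ℕ) :
    translation (1 / (n : ℝ) ^ k) ∈ BSgroup n hn := by
  have hpow : dilation n hn ^ k ∈ BSgroup n hn := pow_mem (dilation_mem_BSgroup hn) k
  have hconj : translation (1 / (n : ℝ) ^ k) =
      (dilation n hn ^ k)⁻¹ * (translation 1 * dilation n hn ^ k) := by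
    rw [eq_inv_mul_iff_mul_eq]
    ext x
    simp only [mul_apply, translation_apply, dilation_pow_apply]
    field_simp
  rw [hconj]
  exact mul_mem (inv_mem hpow) (mul_mem (translation_one_mem_BSgroup hn) hpow)

lemma dense_setOf_translation_mem_BSgroup : Dense {s | translation s ∈ BSgroup n hn} := by
  let S : AddSubgroup ℝ := (Subgroup.toAddSubgroup (BSgroup n hn)).comap
    (AddMonoidHom.mk' (fun s ↦ Additive.ofMul (translation s)) translation_add)
  refine S.dense_of_not_isolated_zero fun ε hε ↦ ?_
  have hn₁ : 1 < (n : ℝ) := by exact_mod_cast hn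
  obtain ⟨k, hk⟩ := pow_unbounded_of_one_lt (1 / ε) hn₁
  exact ⟨1 / (n : ℝ) ^ k, translation_one_div_pow_mem_BSgroup hn k, by positivity,
    (one_div_lt hε (by positivity)).1 hk⟩

variable {hn}

theorem CommutesOffCompact.eq_translation_or_isCompact_supp {f : ℝ ≃ₜ ℝ}
    (hf : CommutesOffCompact (BSgroup n hn) f) :
    (∃ t, f = translation t) ∨ IsCompact (Supp f) := by
  have hdense := dense_setOf_translation_mem_BSgroup hn
  have hself : AsympCommute f f := by simpa using hf.asympCommute_conj hdense (one_mem _)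
  have hdil := hf.asympCommute_conj hdense (dilation_mem_BSgroup hn)
  by_cases! hfree : ∀ x, f x ≠ x
  · left
    have hconst := (injective_or_forall_eq_of_periodic (continuous_displacement f)
      fun δ p ↦ hself.periodic_displacement hfree).resolve_left
        (hself.not_injective_displacement hn hdil hfree)
    refine ⟨displacement f 0, Homeomorph.ext fun x ↦ ?_⟩
    rw [apply_eq_add_displacement, hconst, translation_apply]
  · obtain ⟨p, hp⟩ := hfree
    exact .inr (hself.isCompact_supp hp)

end BaumslagSolitar

end RealHomeo

open RealHomeo in
theorem commutator_with_translation_compact_support_general {n : ℕ} {hn : 2 ≤ n} {h : ℝ ≃ₜ ℝ}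
    (hh : CommutesOffCompact (BSgroup n hn) h) (t : ℝ) :
    IsCompact (Supp (h * translation t * h⁻¹ * (translation t)⁻¹)) := by
  rcases hh.eq_translation_or_isCompact_supp with ⟨r, rfl⟩ | hcompact
  · have hcomm : translation r * translation t = translation t * translation r := by
      rw [← translation_add, add_comm, translation_add]
    rw [hcomm, mul_inv_cancel_right, mul_inv_cancel]
    exact isCompact_supp_one
  · rw [mul_assoc, mul_assoc, ← mul_assoc (translation t)]
    exact isCompact_supp_mul hcompact (isCompact_supp_conj _ (isCompact_supp_inv hcompact))

theorem commutator_with_translation_compact_support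
    (n : ℕ) (hn : 2 ≤ n) (t₀ : ℝ)
    (ht₀ : ∃ (p : ℤ) (k : ℕ), t₀ = (p : ℝ) / (n : ℝ) ^ k)
    (h : ℝ ≃ₜ ℝ) (hhmono : StrictMono h)
    (hK : ∃ K : Set ℝ, IsCompact K ∧
      ∀ u ∈ BSgroup n hn, (u '' K) ∩ K = ∅ → Commute h (u * h * u⁻¹))
    (hK' : ∃ K' : Set ℝ, IsCompact K' ∧
      ∀ u ∈ BSgroup n hn, (u '' K') ∩ K' = ∅ →
        Commute (h * translation t₀ * h⁻¹ * (translation t₀)⁻¹)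
          (u * (h * translation t₀ * h⁻¹ * (translation t₀)⁻¹) * u⁻¹))
    (hcomm : Commute h (translation t₀ * h * (translation t₀)⁻¹))
    (hnc : ¬ Commute h (translation t₀)) :
    IsCompact (Supp (h * translation t₀ * h⁻¹ * (translation t₀)⁻¹)) := by
  exact commutator_with_translation_compact_support_general hK t₀
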